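/- For ν > −1/2, real x ≥ 0, and integer j ≥ 0, the j-th derivative of the function x ↦ G_ν(x²) is bounded in absolute value by Γ((j+1)/2)/(4^ν Γ(j/2 + ν + 1)), where G_ν(z²) = (1/(4^ν Γ(ν+1/2))) ∫_{−1}^1 (1−s²)^{ν−1/2} e^{ixs} ds. -/

import Mathlib

noncomputable def G (ν : ℝ) (w : ℂ) : ℂ :=
  (((4:ℝ)^(-ν) * Real.sqrt Real.pi : ℝ) : ℂ) *
    ∑' m : ℕ, ((-1 : ℂ)^m * (w/4)^m) / ((m.factorial : ℂ) * ((Real.Gamma (ν + m + 1) : ℝ) : ℂ))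

/-!
Poisson's integral says that `x ↦ G ν (x ^ 2)` is `4 ^ (-ν) / Γ(ν + 1/2)` times the characteristic
function of the measure `(1 - s ^ 2) ^ (ν - 1/2) ds` on `(-1, 1)`. The `j`-th derivative of the
characteristic function of a measure is bounded by its `j`-th absolute moment, and here the
substitution `t = s ^ 2` turns the absolute moments into beta integrals. Poisson's integral itself
follows by integrating the exponential series term by term: the odd moments vanish by symmetry, and
Legendre's duplication formula matches the even ones with the coefficients of `G`.
-/

open MeasureTheory Set
open scoped Nat

section CharFun

variable {μ : Measure ℝ} {t : ℝ}

lemma norm_iteratedDeriv_charFun_le [IsFiniteMeasure μ] {n : ℕ} (hμ : MemLp id n μ) :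
    ‖iteratedDeriv n (charFun μ) t‖ ≤ ∫ x, |x| ^ n ∂μ := by
  rw [iteratedDeriv_charFun hμ, norm_mul, norm_pow, Complex.norm_I, one_pow, one_mul]
  refine (norm_integral_le_integral_norm _).trans_eq (integral_congr_ae (.of_forall fun x ↦ ?_))
  have norm_exp : ‖Complex.exp (t * x * Complex.I)‖ = 1 := mod_cast Complex.norm_exp_ofReal_mul_I _
  simp only [norm_mul, norm_pow, norm_exp, mul_one, Complex.norm_real, Real.norm_eq_abs]

lemma hasSum_charFun (hμ : Integrable (fun x ↦ Real.exp |t * x|) μ) :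
    HasSum (fun n : ℕ ↦ (t * Complex.I) ^ n / n ! * ∫ x, x ^ n ∂μ) (charFun μ t) := by
  have moment (n : ℕ) : (t * Complex.I) ^ n / n ! * ∫ x, x ^ n ∂μ
      = ∫ x, (t * x * Complex.I) ^ n / n ! ∂μ := by
    rw [← integral_complex_ofReal, ← integral_const_mul]
    congr with x
    push_cast
    ring
  have hasSum_exp_abs (x : ℝ) : HasSum (fun n : ℕ ↦ |t * x| ^ n / n !) (Real.exp |t * x|) := by
    simpa only [Real.exp_eq_exp_ℝ] using NormedSpace.expSeries_div_hasSum_exp |t * x|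
  simp_rw [moment, charFun_apply_real]
  refine hasSum_integral_of_dominated_convergence (fun n x ↦ |t * x| ^ n / n !)
    (fun n ↦ by fun_prop) (fun n ↦ .of_forall fun x ↦ ?_)
    (.of_forall fun x ↦ (hasSum_exp_abs x).summable) ?_ (.of_forall fun x ↦ ?_)
  · simp [abs_mul]
  · simpa only [(hasSum_exp_abs _).tsum_eq] using hμ
  · simpa only [Complex.exp_eq_exp_ℂ] using
      NormedSpace.expSeries_div_hasSum_exp (t * x * Complex.I : ℂ)

lemma integral_pow_eq_zero_of_odd [μ.IsNegInvariant] {n : ℕ} (hn : Odd n) :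
    ∫ x, x ^ n ∂μ = 0 := by
  have h := integral_neg_eq_self (fun x : ℝ ↦ x ^ n) μ
  simp only [hn.neg_pow, integral_neg] at h
  linarith

lemma hasSum_charFun_of_isNegInvariant [μ.IsNegInvariant]
    (hμ : Integrable (fun x ↦ Real.exp |t * x|) μ) :
    HasSum (fun m : ℕ ↦ (((-1) ^ m * t ^ (2 * m) / (2 * m)! * ∫ x, x ^ (2 * m) ∂μ : ℝ) : ℂ))
      (charFun μ t) := by
  have even_terms : HasSum
      (fun m : ℕ ↦ (t * Complex.I) ^ (2 * m) / (2 * m)! * ∫ x, x ^ (2 * m) ∂μ) (charFun μ t) := by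
    refine (Function.Injective.hasSum_iff (mul_right_injective₀ two_ne_zero) fun n hn ↦ ?_).2
      (hasSum_charFun hμ)
    have hodd : Odd n := by
      rw [← Nat.not_even_iff_odd, even_iff_exists_two_mul]
      exact fun ⟨m, hm⟩ ↦ hn ⟨m, hm.symm⟩
    simp only [integral_pow_eq_zero_of_odd hodd, Complex.ofReal_zero, mul_zero]
  convert even_terms using 2 with m
  rw [mul_pow, pow_mul Complex.I, Complex.I_sq]
  push_cast
  ring

end CharFun

lemma isNegInvariant_withDensity {E : Type*} [MeasurableSpace E] [InvolutiveNeg E]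
    [MeasurableNeg E] {μ : Measure E} [μ.IsNegInvariant] {f : E → ENNReal} (hf : f.Even) :
    (μ.withDensity f).IsNegInvariant where
  neg_eq_self := by
    ext s hs
    have change_of_variables := (Measure.measurePreserving_neg μ).setLIntegral_comp_preimage_emb
      (MeasurableEquiv.neg E).measurableEmbedding f s
    rw [Measure.neg_apply, withDensity_apply _ hs.neg, withDensity_apply _ hs,
      ← change_of_variables]
    simp only [hf _, Set.neg_preimage]

lemma integral_rpow_mul_one_sub_rpow {a b : ℝ} (ha : 0 < a) (hb : 0 < b) :
    ∫ t in Ioo (0 : ℝ) 1, t ^ (a - 1) * (1 - t) ^ (b - 1) =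
      Real.Gamma a * Real.Gamma b / Real.Gamma (a + b) := by
  have cast_integrand : EqOn (fun t : ℝ ↦ ((t ^ (a - 1) * (1 - t) ^ (b - 1) : ℝ) : ℂ))
      (fun t ↦ (t : ℂ) ^ ((a : ℂ) - 1) * (1 - t) ^ ((b : ℂ) - 1)) (Ioc 0 1) := fun t ht ↦ by
    simp [Complex.ofReal_cpow ht.1.le, Complex.ofReal_cpow (sub_nonneg.2 ht.2)]
  apply Complex.ofReal_injective
  rw [← integral_Ioc_eq_integral_Ioo, ← integral_complex_ofReal,
    setIntegral_congr_fun measurableSet_Ioc cast_integrand,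
    ← intervalIntegral.integral_of_le zero_le_one]
  change Complex.betaIntegral a b = _
  rw [Complex.betaIntegral_eq_Gamma_mul_div _ _ (by simpa) (by simpa)]
  push_cast [← Complex.Gamma_ofReal]
  rfl

lemma Gamma_nat_add_half_eq_factorial (m : ℕ) :
    Real.Gamma (m + 1 / 2) = (2 * m)! * √Real.pi / (4 ^ m * m !) := by
  have duplication := Real.Gamma_mul_Gamma_add_half (m + 1 / 2)
  have two_rpow : (2 : ℝ) ^ (1 - 2 * ((m : ℝ) + 1 / 2)) = (4 ^ m)⁻¹ := by
    rw [show 1 - 2 * ((m : ℝ) + 1 / 2) = -((2 * m : ℕ) : ℝ) by push_cast; ring,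
      Real.rpow_neg zero_le_two, Real.rpow_natCast, pow_mul]
    norm_num
  rw [two_rpow, show (m : ℝ) + 1 / 2 + 1 / 2 = m + 1 by ring,
    show 2 * ((m : ℝ) + 1 / 2) = (2 * m : ℕ) + 1 by push_cast; ring,
    Real.Gamma_nat_eq_factorial, Real.Gamma_nat_eq_factorial] at duplication
  field_simp at duplication ⊢
  linarith

/-- The Gegenbauer weight `(1 - s²) ^ (ν - 1/2)` on `(-1, 1)`, extended by `0` to the real line. -/
noncomputable def gegenbauerWeight (ν s : ℝ) : ℝ :=
  (Ioo (-1 : ℝ) 1).indicator (fun s ↦ (1 - s ^ 2) ^ (ν - 1 / 2)) s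

/-- The measure on `ℝ` with density `gegenbauerWeight ν`. Up to normalisation, its characteristic
function is the Poisson integral of the Bessel function of order `ν`. -/
noncomputable def gegenbauerMeasure (ν : ℝ) : Measure ℝ :=
  volume.withDensity fun s ↦ ENNReal.ofReal (gegenbauerWeight ν s)

section Gegenbauer

variable {ν : ℝ}

lemma measurable_gegenbauerWeight : Measurable (gegenbauerWeight ν) :=
  Measurable.indicator (by fun_prop) measurableSet_Ioo

lemma gegenbauerWeight_nonneg (s : ℝ) : 0 ≤ gegenbauerWeight ν s :=
  indicator_nonneg (fun s hs ↦ Real.rpow_nonneg (by nlinarith [hs.1, hs.2]) _) s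

lemma gegenbauerWeight_eq_indicator_sq (s : ℝ) :
    gegenbauerWeight ν s = (Iio 1).indicator (fun t ↦ (1 - t) ^ (ν - 1 / 2)) (s ^ 2) := by
  have mem_iff : s ∈ Ioo (-1) 1 ↔ s ^ 2 ∈ Iio 1 := by
    rw [mem_Ioo, ← abs_lt, mem_Iio, sq_lt_one_iff_abs_lt_one]
  simp only [gegenbauerWeight, indicator, mem_iff]

lemma gegenbauerWeight_abs (s : ℝ) : gegenbauerWeight ν |s| = gegenbauerWeight ν s := by
  simp only [gegenbauerWeight_eq_indicator_sq, sq_abs]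

instance : (gegenbauerMeasure ν).IsNegInvariant :=
  isNegInvariant_withDensity fun s ↦ by simp only [gegenbauerWeight_eq_indicator_sq, neg_sq]

lemma ae_abs_lt_one_gegenbauerMeasure : ∀ᵐ s ∂gegenbauerMeasure ν, |s| < 1 := by
  rw [gegenbauerMeasure, ae_withDensity_iff measurable_gegenbauerWeight.ennreal_ofReal]
  refine .of_forall fun s weight_ne_zero ↦ ?_
  by_contra hs
  exact weight_ne_zero (by simp [gegenbauerWeight, indicator, ← abs_lt, hs])

lemma integral_gegenbauerMeasure {E : Type*} [NormedAddCommGroup E] [NormedSpace ℝ E] (f : ℝ → E) :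
    ∫ s, f s ∂gegenbauerMeasure ν = ∫ s, gegenbauerWeight ν s • f s := by
  rw [gegenbauerMeasure, integral_withDensity_eq_integral_toReal_smul
    measurable_gegenbauerWeight.ennreal_ofReal (.of_forall fun _ ↦ ENNReal.ofReal_lt_top)]
  simp only [ENNReal.toReal_ofReal (gegenbauerWeight_nonneg _)]

lemma integral_abs_rpow_gegenbauerMeasure (hν : -(1 / 2) < ν) {p : ℝ} (hp : -1 < p) :
    ∫ s, |s| ^ p ∂gegenbauerMeasure ν =
      Real.Gamma ((p + 1) / 2) * Real.Gamma (ν + 1 / 2) / Real.Gamma (p / 2 + ν + 1) := by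
  let g : ℝ → ℝ := (Iio 1).indicator fun t ↦ t ^ ((p + 1) / 2 - 1) * (1 - t) ^ (ν + 1 / 2 - 1)
  have substitution : EqOn (fun s ↦ 2 * (gegenbauerWeight ν s * s ^ p))
      (fun s ↦ (2 * s ^ ((2 : ℝ) - 1)) • g (s ^ (2 : ℝ))) (Ioi 0) := fun s (hs : 0 < s) ↦ by
    have rpow_eq : s ^ p = s * (s ^ 2) ^ ((p + 1) / 2 - 1) := by
      rw [show p = 1 + 2 * ((p + 1) / 2 - 1) by ring, Real.rpow_add hs, Real.rpow_one,
        Real.rpow_mul hs.le, Real.rpow_two]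
      ring_nf
    simp only [g, gegenbauerWeight_eq_indicator_sq, rpow_eq, Real.rpow_two, indicator, smul_eq_mul,
      show (2 : ℝ) - 1 = 1 by norm_num, show ν + 1 / 2 - 1 = ν - 1 / 2 by ring, Real.rpow_one]
    split_ifs <;> ring
  calc ∫ s, |s| ^ p ∂gegenbauerMeasure ν
    _ = ∫ s, gegenbauerWeight ν |s| * |s| ^ p := by
      simp only [integral_gegenbauerMeasure, gegenbauerWeight_abs, smul_eq_mul]
    _ = ∫ s in Ioi 0, 2 * (gegenbauerWeight ν s * s ^ p) := by
      rw [integral_comp_abs (f := fun s ↦ gegenbauerWeight ν s * s ^ p), integral_const_mul]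
    _ = ∫ t in Ioi 0, g t := by
      rw [setIntegral_congr_fun measurableSet_Ioi substitution,
        integral_comp_rpow_Ioi_of_pos two_pos]
    _ = ∫ t in Ioo (0 : ℝ) 1, t ^ ((p + 1) / 2 - 1) * (1 - t) ^ (ν + 1 / 2 - 1) := by
      rw [setIntegral_indicator measurableSet_Iio, Ioi_inter_Iio]
    _ = _ := by
      rw [integral_rpow_mul_one_sub_rpow (by linarith) (by linarith)]
      ring_nf

lemma integral_abs_pow_gegenbauerMeasure (hν : -(1 / 2) < ν) (n : ℕ) :
    ∫ s, |s| ^ n ∂gegenbauerMeasure ν =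
      Real.Gamma ((n + 1) / 2) * Real.Gamma (ν + 1 / 2) / Real.Gamma (n / 2 + ν + 1) := by
  have hn : (-1 : ℝ) < n := by linarith [n.cast_nonneg (α := ℝ)]
  simpa only [Real.rpow_natCast] using integral_abs_rpow_gegenbauerMeasure hν hn

lemma isFiniteMeasure_gegenbauerMeasure (hν : -(1 / 2) < ν) :
    IsFiniteMeasure (gegenbauerMeasure ν) := by
  rw [← integrable_const_iff_isFiniteMeasure (one_ne_zero (α := ℝ))]
  apply Integrable.of_integral_ne_zero
  have mass := integral_abs_pow_gegenbauerMeasure hν 0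
  simp only [pow_zero] at mass
  rw [mass]
  have hΓ : 0 < Real.Gamma (ν + 1 / 2) := Real.Gamma_pos_of_pos (by linarith)
  have hΓ' : 0 < Real.Gamma ((0 : ℕ) / 2 + ν + 1) := Real.Gamma_pos_of_pos (by norm_num; linarith)
  positivity

lemma memLp_id_gegenbauerMeasure (hν : -(1 / 2) < ν) (p : ENNReal) :
    MemLp id p (gegenbauerMeasure ν) :=
  have := isFiniteMeasure_gegenbauerMeasure hν
  .of_bound aestronglyMeasurable_id 1 (ae_abs_lt_one_gegenbauerMeasure.mono fun _ hs ↦ hs.le)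

lemma integrable_exp_abs_mul_gegenbauerMeasure (hν : -(1 / 2) < ν) (t : ℝ) :
    Integrable (fun s ↦ Real.exp |t * s|) (gegenbauerMeasure ν) := by
  have := isFiniteMeasure_gegenbauerMeasure hν
  refine .of_bound (by fun_prop) (Real.exp |t|) ?_
  filter_upwards [ae_abs_lt_one_gegenbauerMeasure] with s hs
  rw [Real.norm_eq_abs, Real.abs_exp, Real.exp_le_exp, abs_mul]
  exact mul_le_of_le_one_right (abs_nonneg t) hs.le

lemma integral_pow_two_mul_gegenbauerMeasure (hν : -(1 / 2) < ν) (m : ℕ) :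
    ∫ s, s ^ (2 * m) ∂gegenbauerMeasure ν =
      (2 * m)! * √Real.pi / (4 ^ m * m !) * Real.Gamma (ν + 1 / 2) / Real.Gamma (ν + m + 1) := by
  have abs_moment := integral_abs_pow_gegenbauerMeasure hν (2 * m)
  simp only [(even_two_mul m).pow_abs] at abs_moment
  rw [abs_moment, ← Gamma_nat_add_half_eq_factorial]
  push_cast
  ring_nf

lemma hasSum_charFun_gegenbauerMeasure (hν : -(1 / 2) < ν) (t : ℝ) :
    HasSum (fun m : ℕ ↦ ((Real.Gamma (ν + 1 / 2) * √Real.pi : ℝ) : ℂ) *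
      (((-1) ^ m * ((t : ℂ) ^ 2 / 4) ^ m) / (m ! * (Real.Gamma (ν + m + 1) : ℝ))))
      (charFun (gegenbauerMeasure ν) t) := by
  convert hasSum_charFun_of_isNegInvariant (integrable_exp_abs_mul_gegenbauerMeasure hν t)
    using 2 with m
  have factorial_ne_zero : ((2 * m)! : ℂ) ≠ 0 := mod_cast (2 * m).factorial_ne_zero
  rw [integral_pow_two_mul_gegenbauerMeasure hν, pow_mul, div_pow]
  push_cast
  field_simp

lemma G_sq_eq_charFun_gegenbauerMeasure (hν : -(1 / 2) < ν) (x : ℝ) :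
    G ν ((x : ℂ) ^ 2) =
      ((4 ^ (-ν) / Real.Gamma (ν + 1 / 2) : ℝ) : ℂ) * charFun (gegenbauerMeasure ν) x := by
  have hΓ : Real.Gamma (ν + 1 / 2) ≠ 0 := (Real.Gamma_pos_of_pos (by linarith)).ne'
  rw [← (hasSum_charFun_gegenbauerMeasure hν x).tsum_eq, tsum_mul_left, ← mul_assoc,
    ← Complex.ofReal_mul, ← mul_assoc, div_mul_cancel₀ _ hΓ, G]

end Gegenbauer

theorem G_deriv_bound_general (ν : ℝ) (hν : -(1 / 2) < ν) (j : ℕ) (x : ℝ) :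
    ‖iteratedDeriv j (fun x : ℝ ↦ G ν ((x : ℂ) ^ 2)) x‖
      ≤ Real.Gamma ((j + 1) / 2) / ((4 : ℝ) ^ ν * Real.Gamma ((j : ℝ) / 2 + ν + 1)) := by
  have := isFiniteMeasure_gegenbauerMeasure hν
  have hΓ : 0 < Real.Gamma (ν + 1 / 2) := Real.Gamma_pos_of_pos (by linarith)
  simp only [G_sq_eq_charFun_gegenbauerMeasure hν]
  rw [iteratedDeriv_const_mul_field, norm_mul, Complex.norm_of_nonneg (by positivity)]
  calc 4 ^ (-ν) / Real.Gamma (ν + 1 / 2) * ‖iteratedDeriv j (charFun (gegenbauerMeasure ν)) x‖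
    _ ≤ 4 ^ (-ν) / Real.Gamma (ν + 1 / 2) * ∫ s, |s| ^ j ∂gegenbauerMeasure ν := by
      gcongr
      exact norm_iteratedDeriv_charFun_le (memLp_id_gegenbauerMeasure hν j)
    _ = Real.Gamma ((j + 1) / 2) / (4 ^ ν * Real.Gamma (j / 2 + ν + 1)) := by
      rw [integral_abs_pow_gegenbauerMeasure hν, Real.rpow_neg zero_le_four]
      generalize Real.Gamma (ν + 1 / 2) = Γν at hΓ ⊢
      field_simp

theorem G_deriv_bound (ν : ℝ) (hν : -(1/2) < ν) (j : ℕ) (x : ℝ) (hx : 0 ≤ x) :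
    ‖iteratedDeriv j (fun x : ℝ => G ν ((x:ℂ)^2)) x‖
      ≤ Real.Gamma ((j+1)/2) / ((4:ℝ)^ν * Real.Gamma ((j:ℝ)/2 + ν + 1)) :=
  G_deriv_bound_general ν hν j x
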